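/- Let U ⊆ ℝ⁵ be open, let ρ_{mn} : U → ℝ be differentiable and Γ_{mnP} : U → ℝ be functions for internal indices m,n ∈ {4,5} and P ∈ {1,…,5}, and let G⁴⁴ = G⁵⁵ > 0 be real constants with g := √((G⁴⁴)²+(G⁵⁵)²). Assume the symmetry condition Γ_{45P} = Γ_{54P} for all P. With Γ^h_{mP} := G^{hh}Γ_{hmP} (no sum), define the internal covariant derivative ρ_{mn;P} := ∂_Pρ_{mn} − Σ_{h∈{4,5}}(ρ_{hn}Γ^h_{mP} + ρ_{mh}Γ^h_{nP}). Define l_L := (ρ₄₄+ρ₅₅)/√2, l_R := (ρ₄₄−ρ₅₅)/√2, ν_L := (ρ₅₄+ρ₄₅)/√2, ν_R := (ρ₅₄−ρ₄₅)/√2, with l_{L;P} := (ρ_{44;P}+ρ_{55;P})/√2, l_{R;P} := (ρ_{44;P}−ρ_{55;P})/√2, ν_{L;P} := (ρ_{54;P}+ρ_{45;P})/√2, ν_{R;P} := (ρ_{54;P}−ρ_{45;P})/√2, and the gauge potentials Z_P := (Γ_{44P}+Γ_{55P})/√2, A_P := (Γ_{44P}−Γ_{55P})/√2, W¹_P :=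 (Γ_{45P}+Γ_{54P})/√2. Then on U, for all P: l_{L;P} = ∂_Pl_L − g·l_L·Z_P − g·l_R·A_P − g·ν_L·W¹_P; l_{R;P} = ∂_Pl_R − g·l_R·Z_P − g·l_L·A_P; ν_{L;P} = ∂_Pν_L − g·ν_L·Z_P − g·l_L·W¹_P; ν_{R;P} = ∂_Pν_R − g·ν_R·Z_P. In particular the right-handed neutrino ν_R couples neither to the electromagnetic potential A_P nor to W¹_P, and ν_L does not couple to A_P (chiral asymmetry arises spontaneously). -/

import Mathlib

noncomputable section

/-- Partial derivative in the `P`-th coordinate direction of `ℝ⁵`. -/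
def pd (P : Fin 5) (f : (Fin 5 → ℝ) → ℝ) (x : Fin 5 → ℝ) : ℝ :=
  fderiv ℝ f x (Pi.single P 1)

/-- Internal covariant derivative
`ρ_{mn;P} := ∂_P ρ_{mn} − Σ_h (ρ_{hn} Γ^h_{mP} + ρ_{mh} Γ^h_{nP})`, with
`Γ^h_{mP} := G^{hh} Γ_{hmP}` (no sum); internal index `i : Fin 2` corresponds
to the coordinate direction `4 + i`. -/
def covD (Ginv : Fin 2 → ℝ) (Γ : Fin 2 → Fin 2 → Fin 5 → (Fin 5 → ℝ) → ℝ)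
    (ρ : Fin 2 → Fin 2 → (Fin 5 → ℝ) → ℝ) (m n : Fin 2) (P : Fin 5)
    (x : Fin 5 → ℝ) : ℝ :=
  pd P (ρ m n) x
    - ∑ h : Fin 2, (ρ h n x * (Ginv h * Γ h m P x) + ρ m h x * (Ginv h * Γ h n P x))

/-! The passage from `(u, v)` to `((u + v) / √2, (u - v) / √2)` is orthogonal, so it preserves the
bilinear form `u * u' + v * v'`. The coupling terms of `ρ₄₄;P ± ρ₅₅;P` and `ρ₅₄;P ± ρ₄₅;P` are built
from such forms in the charges and the potentials, hence are bilinear in the chiral fields and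
`Z`, `A`, `W¹`, `W² := (Γ₄₅ - Γ₅₄) / √2`. Symmetry of `Γ` says that `W² = 0`, and the two terms in
which `W²` occurs are then absent. -/

section Mixing

variable {X : Type*}

/-- The symmetric mixture `(u + v) / √2` of two fields: left-handed leptons are symmetric mixtures
of charges, and `Z`, `W¹` are symmetric mixtures of potentials. -/
def symMix (u v : X → ℝ) (x : X) : ℝ :=
  (u x + v x) / √2

/-- The antisymmetric mixture `(u - v) / √2` of two fields: right-handed leptons are antisymmetric
mixtures of charges, and `A`, `W²` are antisymmetric mixtures of potentials. -/
def antiMix (u v : X → ℝ) (x : X) : ℝ :=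
  (u x - v x) / √2

theorem div_sqrt_two_mul_div_sqrt_two (a b : ℝ) : a / √2 * (b / √2) = a * b / 2 := by
  rw [div_mul_div_comm, Real.mul_self_sqrt zero_le_two]

theorem mul_add_mul_eq_mix (u v u' v' : X → ℝ) (x : X) :
    u x * u' x + v x * v' x = symMix u v x * symMix u' v' x + antiMix u v x * antiMix u' v' x := by
  simp only [symMix, antiMix, div_sqrt_two_mul_div_sqrt_two]
  ring

theorem mul_sub_mul_eq_mix (u v u' v' : X → ℝ) (x : X) :
    u x * u' x - v x * v' x = symMix u v x * antiMix u' v' x + antiMix u v x * symMix u' v' x := by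
  simp only [symMix, antiMix, div_sqrt_two_mul_div_sqrt_two]
  ring

theorem add_mul_add_eq_symMix_mul_symMix (u v u' v' : X → ℝ) (x : X) :
    (u x + v x) * (u' x + v' x) = 2 * (symMix u v x * symMix u' v' x) := by
  rw [symMix, symMix, div_sqrt_two_mul_div_sqrt_two, mul_div_cancel₀ _ two_ne_zero]

theorem add_mul_sub_eq_symMix_mul_antiMix (u v u' v' : X → ℝ) (x : X) :
    (u x + v x) * (u' x - v' x) = 2 * (symMix u v x * antiMix u' v' x) := by
  rw [symMix, antiMix, div_sqrt_two_mul_div_sqrt_two, mul_div_cancel₀ _ two_ne_zero]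

theorem sub_two_mul_div_sqrt_two (a k : ℝ) : (a - 2 * k) / √2 = a / √2 - √2 * k := by
  rw [sub_div, mul_div_right_comm, Real.div_sqrt]

theorem sqrt_sq_add_sq_self {c : ℝ} (hc : 0 ≤ c) : √(c ^ 2 + c ^ 2) = √2 * c := by
  rw [← two_mul, Real.sqrt_mul zero_le_two, Real.sqrt_sq hc]

end Mixing

section PartialDerivative

variable {u v : (Fin 5 → ℝ) → ℝ} {x : Fin 5 → ℝ}

theorem pd_div_const (P : Fin 5) (hu : DifferentiableAt ℝ u x) (a : ℝ) :
    pd P (fun y => u y / a) x = pd P u x / a := by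
  simp only [pd, div_eq_inv_mul, fderiv_const_mul hu, smul_apply, smul_eq_mul]

theorem pd_symMix (P : Fin 5) (hu : DifferentiableAt ℝ u x) (hv : DifferentiableAt ℝ v x) :
    pd P (symMix u v) x = (pd P u x + pd P v x) / √2 := by
  have pd_add : pd P (u + v) x = pd P u x + pd P v x := by
    simp only [pd, fderiv_add hu hv, add_apply]
  rw [← pd_add]
  exact pd_div_const P (hu.add hv) √2

theorem pd_antiMix (P : Fin 5) (hu : DifferentiableAt ℝ u x) (hv : DifferentiableAt ℝ v x) :
    pd P (antiMix u v) x = (pd P u x - pd P v x) / √2 := by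
  have pd_sub : pd P (u - v) x = pd P u x - pd P v x := by
    simp only [pd, fderiv_sub hu hv, sub_apply]
  rw [← pd_sub]
  exact pd_div_const P (hu.sub hv) √2

end PartialDerivative

section CovariantDerivative

variable {ρ : Fin 2 → Fin 2 → (Fin 5 → ℝ) → ℝ} {x : Fin 5 → ℝ}
  (Γ : Fin 2 → Fin 2 → Fin 5 → (Fin 5 → ℝ) → ℝ) (c : ℝ) (P : Fin 5)

theorem covD_diag_add_div_sqrt_two (hρ₀ : DifferentiableAt ℝ (ρ 0 0) x)
    (hρ₁ : DifferentiableAt ℝ (ρ 1 1) x) :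
    (covD (fun _ => c) Γ ρ 0 0 P x + covD (fun _ => c) Γ ρ 1 1 P x) / √2 =
      pd P (symMix (ρ 0 0) (ρ 1 1)) x - √2 * (c *
        (symMix (ρ 0 0) (ρ 1 1) x * symMix (Γ 0 0 P) (Γ 1 1 P) x
          + antiMix (ρ 0 0) (ρ 1 1) x * antiMix (Γ 0 0 P) (Γ 1 1 P) x
          + symMix (ρ 1 0) (ρ 0 1) x * symMix (Γ 0 1 P) (Γ 1 0 P) x)) := by
  have diagonal := mul_add_mul_eq_mix (ρ 0 0) (ρ 1 1) (Γ 0 0 P) (Γ 1 1 P) x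
  have offDiagonal := add_mul_add_eq_symMix_mul_symMix (ρ 1 0) (ρ 0 1) (Γ 0 1 P) (Γ 1 0 P) x
  rw [pd_symMix P hρ₀ hρ₁, ← sub_two_mul_div_sqrt_two]
  congr 1
  simp only [covD, Fin.sum_univ_two]
  linear_combination -2 * c * diagonal - c * offDiagonal

theorem covD_diag_sub_div_sqrt_two (hρ₀ : DifferentiableAt ℝ (ρ 0 0) x)
    (hρ₁ : DifferentiableAt ℝ (ρ 1 1) x) :
    (covD (fun _ => c) Γ ρ 0 0 P x - covD (fun _ => c) Γ ρ 1 1 P x) / √2 =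
      pd P (antiMix (ρ 0 0) (ρ 1 1)) x - √2 * (c *
        (symMix (ρ 0 0) (ρ 1 1) x * antiMix (Γ 0 0 P) (Γ 1 1 P) x
          + antiMix (ρ 0 0) (ρ 1 1) x * symMix (Γ 0 0 P) (Γ 1 1 P) x
          - symMix (ρ 1 0) (ρ 0 1) x * antiMix (Γ 0 1 P) (Γ 1 0 P) x)) := by
  have diagonal := mul_sub_mul_eq_mix (ρ 0 0) (ρ 1 1) (Γ 0 0 P) (Γ 1 1 P) x
  have offDiagonal := add_mul_sub_eq_symMix_mul_antiMix (ρ 1 0) (ρ 0 1) (Γ 0 1 P) (Γ 1 0 P) x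
  rw [pd_antiMix P hρ₀ hρ₁, ← sub_two_mul_div_sqrt_two]
  congr 1
  simp only [covD, Fin.sum_univ_two]
  linear_combination -2 * c * diagonal + c * offDiagonal

theorem covD_offDiag_add_div_sqrt_two (hρ₁₀ : DifferentiableAt ℝ (ρ 1 0) x)
    (hρ₀₁ : DifferentiableAt ℝ (ρ 0 1) x) :
    (covD (fun _ => c) Γ ρ 1 0 P x + covD (fun _ => c) Γ ρ 0 1 P x) / √2 =
      pd P (symMix (ρ 1 0) (ρ 0 1)) x - √2 * (c *
        (symMix (ρ 1 0) (ρ 0 1) x * symMix (Γ 0 0 P) (Γ 1 1 P) x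
          + symMix (ρ 0 0) (ρ 1 1) x * symMix (Γ 0 1 P) (Γ 1 0 P) x
          + antiMix (ρ 0 0) (ρ 1 1) x * antiMix (Γ 0 1 P) (Γ 1 0 P) x)) := by
  have diagonal := add_mul_add_eq_symMix_mul_symMix (ρ 1 0) (ρ 0 1) (Γ 0 0 P) (Γ 1 1 P) x
  have offDiagonal := mul_add_mul_eq_mix (ρ 0 0) (ρ 1 1) (Γ 0 1 P) (Γ 1 0 P) x
  rw [pd_symMix P hρ₁₀ hρ₀₁, ← sub_two_mul_div_sqrt_two]
  congr 1
  simp only [covD, Fin.sum_univ_two]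
  linear_combination -c * diagonal - 2 * c * offDiagonal

/- Here the off-diagonal potentials enter `ρ₅₄;P` and `ρ₄₅;P` through the same sum
`ρ₄₄ Γ₄₅P + ρ₅₅ Γ₅₄P`, which cancels. -/
theorem covD_offDiag_sub_div_sqrt_two (hρ₁₀ : DifferentiableAt ℝ (ρ 1 0) x)
    (hρ₀₁ : DifferentiableAt ℝ (ρ 0 1) x) :
    (covD (fun _ => c) Γ ρ 1 0 P x - covD (fun _ => c) Γ ρ 0 1 P x) / √2 =
      pd P (antiMix (ρ 1 0) (ρ 0 1)) x - √2 * (c *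
        (antiMix (ρ 1 0) (ρ 0 1) x * symMix (Γ 0 0 P) (Γ 1 1 P) x)) := by
  have diagonal := add_mul_sub_eq_symMix_mul_antiMix (Γ 0 0 P) (Γ 1 1 P) (ρ 1 0) (ρ 0 1) x
  rw [pd_antiMix P hρ₁₀ hρ₀₁, ← sub_two_mul_div_sqrt_two]
  congr 1
  simp only [covD, Fin.sum_univ_two]
  linear_combination -c * diagonal

end CovariantDerivative

theorem stmt_4_general {x : Fin 5 → ℝ}
    {ρ : Fin 2 → Fin 2 → (Fin 5 → ℝ) → ℝ} (hρ : ∀ m n, DifferentiableAt ℝ (ρ m n) x)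
    (Γ : Fin 2 → Fin 2 → Fin 5 → (Fin 5 → ℝ) → ℝ)
    {c g : ℝ} (hg : g = √2 * c) {Ginv : Fin 2 → ℝ} (hGinv : Ginv = fun _ => c)
    {lL lR νL νR : (Fin 5 → ℝ) → ℝ}
    (hlL : lL = symMix (ρ 0 0) (ρ 1 1)) (hlR : lR = antiMix (ρ 0 0) (ρ 1 1))
    (hνL : νL = symMix (ρ 1 0) (ρ 0 1)) (hνR : νR = antiMix (ρ 1 0) (ρ 0 1))
    (P : Fin 5) {Z A W1 W2 : (Fin 5 → ℝ) → ℝ}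
    (hZ : Z = symMix (Γ 0 0 P) (Γ 1 1 P)) (hA : A = antiMix (Γ 0 0 P) (Γ 1 1 P))
    (hW1 : W1 = symMix (Γ 0 1 P) (Γ 1 0 P)) (hW2 : W2 = antiMix (Γ 0 1 P) (Γ 1 0 P)) :
    (covD Ginv Γ ρ 0 0 P x + covD Ginv Γ ρ 1 1 P x) / √2
        = pd P lL x - g * lL x * Z x - g * lR x * A x - g * νL x * W1 x ∧
    (covD Ginv Γ ρ 0 0 P x - covD Ginv Γ ρ 1 1 P x) / √2
        = pd P lR x - g * lR x * Z x - g * lL x * A x + g * νL x * W2 x ∧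
    (covD Ginv Γ ρ 1 0 P x + covD Ginv Γ ρ 0 1 P x) / √2
        = pd P νL x - g * νL x * Z x - g * lL x * W1 x - g * lR x * W2 x ∧
    (covD Ginv Γ ρ 1 0 P x - covD Ginv Γ ρ 0 1 P x) / √2
        = pd P νR x - g * νR x * Z x := by
  subst hg hGinv hlL hlR hνL hνR hZ hA hW1 hW2
  refine ⟨?_, ?_, ?_, ?_⟩
  · linear_combination covD_diag_add_div_sqrt_two Γ c P (hρ 0 0) (hρ 1 1)
  · linear_combination covD_diag_sub_div_sqrt_two Γ c P (hρ 0 0) (hρ 1 1)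
  · linear_combination covD_offDiag_add_div_sqrt_two Γ c P (hρ 1 0) (hρ 0 1)
  · linear_combination covD_offDiag_sub_div_sqrt_two Γ c P (hρ 1 0) (hρ 0 1)

/-- **Chiral asymmetry of leptons arises spontaneously** (𝔇 = 5):
under the symmetry condition `Γ₄₅P = Γ₅₄P`, the left/right charged lepton
and neutrino combinations satisfy the stated coupled evolution equations;
in particular `ν_R` couples neither to `A_P` nor to `W¹_P`. -/
theorem stmt_4
    (U : Set (Fin 5 → ℝ)) (hU : IsOpen U)
    (ρ : Fin 2 → Fin 2 → (Fin 5 → ℝ) → ℝ)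
    (hρ : ∀ m n, ∀ x ∈ U, DifferentiableAt ℝ (ρ m n) x)
    (Γ : Fin 2 → Fin 2 → Fin 5 → (Fin 5 → ℝ) → ℝ)
    (G4 G5 : ℝ) (hGeq : G4 = G5) (hGpos : 0 < G4)
    (g : ℝ) (hg : g = Real.sqrt (G4 ^ 2 + G5 ^ 2))
    (Ginv : Fin 2 → ℝ) (hGinv : Ginv = ![G4, G5])
    (hsym : ∀ P : Fin 5, ∀ x ∈ U, Γ 0 1 P x = Γ 1 0 P x)
    (lL lR νL νR : (Fin 5 → ℝ) → ℝ)
    (hlL : ∀ x, lL x = (ρ 0 0 x + ρ 1 1 x) / Real.sqrt 2)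
    (hlR : ∀ x, lR x = (ρ 0 0 x - ρ 1 1 x) / Real.sqrt 2)
    (hνL : ∀ x, νL x = (ρ 1 0 x + ρ 0 1 x) / Real.sqrt 2)
    (hνR : ∀ x, νR x = (ρ 1 0 x - ρ 0 1 x) / Real.sqrt 2)
    (Z A W1 : Fin 5 → (Fin 5 → ℝ) → ℝ)
    (hZ : ∀ P x, Z P x = (Γ 0 0 P x + Γ 1 1 P x) / Real.sqrt 2)
    (hA : ∀ P x, A P x = (Γ 0 0 P x - Γ 1 1 P x) / Real.sqrt 2)
    (hW1 : ∀ P x, W1 P x = (Γ 0 1 P x + Γ 1 0 P x) / Real.sqrt 2) :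
    ∀ x ∈ U, ∀ P : Fin 5,
      (covD Ginv Γ ρ 0 0 P x + covD Ginv Γ ρ 1 1 P x) / Real.sqrt 2
          = pd P lL x - g * lL x * Z P x - g * lR x * A P x - g * νL x * W1 P x ∧
      (covD Ginv Γ ρ 0 0 P x - covD Ginv Γ ρ 1 1 P x) / Real.sqrt 2
          = pd P lR x - g * lR x * Z P x - g * lL x * A P x ∧
      (covD Ginv Γ ρ 1 0 P x + covD Ginv Γ ρ 0 1 P x) / Real.sqrt 2
          = pd P νL x - g * νL x * Z P x - g * lL x * W1 P x ∧
      (covD Ginv Γ ρ 1 0 P x - covD Ginv Γ ρ 0 1 P x) / Real.sqrt 2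
          = pd P νR x - g * νR x * Z P x := by
  intro x hx P
  subst hGeq
  have hW2 : antiMix (Γ 0 1 P) (Γ 1 0 P) x = 0 := by rw [antiMix, hsym P x hx, sub_self, zero_div]
  simpa only [hW2, mul_zero, add_zero, sub_zero] using
    stmt_4_general (fun m n => hρ m n x hx) Γ (hg.trans (sqrt_sq_add_sq_self hGpos.le))
      (hGinv.trans (funext (Fin.forall_fin_two.mpr ⟨rfl, rfl⟩))) (funext hlL) (funext hlR)
      (funext hνL) (funext hνR) P (funext (hZ P)) (funext (hA P)) (funext (hW1 P)) rfl

end
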